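/- Let f be differentiable with L-Lipschitz gradient, g : ℝ^n → ℝ convex, 0 < s ≤ α with Ls < 1. With y = prox_{sg}(x - s∇f(x)) and x⁺ = prox_{αg}(x - α∇f(y)), there exists u ∈ ∂g(x⁺) such that ‖u + ∇f(x⁺)‖ ≤ ((Lα + (1 - Ls)²)/(α(1 - Ls)))‖x - x⁺‖. -/

import Mathlib

/-!
The optimality conditions of the two proximal steps give subgradients
`v = s⁻¹ (x - y) - ∇f(x)` of `g` at `y` and `u = α⁻¹ (x - x⁺) - ∇f(y)` of `g` at `x⁺`; this `u` is the
required one. Put `a = x - y`, `b = x - x⁺`, `e = s (∇f(y) - ∇f(x))` and `t = s / α ∈ (0, 1]`.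
Monotonicity of the subdifferential, `0 ≤ ⟪v - u, y - x⁺⟫`, reads `0 ≤ ⟪a + e - t b, b - a⟫`, so `a`
lies in the ball having the segment from `b` to `t b - e` as a diameter. Hence
`‖a‖ ≤ ‖b‖ + ‖e‖` and `‖a - b‖ ≤ (1 - t) ‖b‖ + ‖e‖`. Since `‖e‖ ≤ s L ‖a‖`, the first bound gives
`‖a‖ ≤ ‖b‖ / (1 - L s)`, the second then `‖y - x⁺‖ ≤ (1 / (1 - L s) - s / α) ‖b‖`, and the result
follows from `‖u + ∇f(x⁺)‖ ≤ ‖b‖ / α + L ‖y - x⁺‖`.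
-/

open scoped RealInnerProductSpace

/-- Optimality condition of the proximal operator: if `p` minimizes `g + ‖· - z‖² / (2 c)`, then
`c⁻¹ (z - p)` is a subgradient of `g` at `p`. -/
lemma subgradient_of_prox {E : Type*} [NormedAddCommGroup E] [InnerProductSpace ℝ E]
    {g : E → ℝ} (hg : ConvexOn ℝ Set.univ g) {c : ℝ} (hc : 0 < c) {p z : E}
    (hp : ∀ w, g p + ‖p - z‖ ^ 2 / (2 * c) ≤ g w + ‖w - z‖ ^ 2 / (2 * c)) (w : E) :
    g p + ⟪c⁻¹ • (z - p), w - p⟫ ≤ g w := by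
  set C : ℝ := ‖w - p‖ ^ 2 / (2 * c) with hC
  set K : ℝ := g w - g p - ⟪c⁻¹ • (z - p), w - p⟫ with hK
  have hC0 : 0 ≤ C := by positivity
  -- Comparing `p` with the points `p + t (w - p)` and dividing by `t`.
  have key : ∀ t : ℝ, 0 < t → t ≤ 1 → 0 ≤ K + t * C := by
    intro t ht ht1
    have h1 := hp ((1 - t) • p + t • w)
    have h2 := hg.2 (Set.mem_univ p) (Set.mem_univ w) (sub_nonneg.2 ht1) ht.le (by ring)
    have h3 : (1 - t) • p + t • w - z = t • (w - p) - (z - p) := by module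
    have h4 : ‖p - z‖ = ‖z - p‖ := norm_sub_rev _ _
    rw [h3, h4, norm_sub_sq_real (t • (w - p)), norm_smul, Real.norm_eq_abs, mul_pow, sq_abs,
      real_inner_smul_left, real_inner_comm (z - p) (w - p)] at h1
    simp only [smul_eq_mul] at h2
    have h5 : (t ^ 2 * ‖w - p‖ ^ 2 - 2 * (t * ⟪z - p, w - p⟫) + ‖z - p‖ ^ 2) / (2 * c)
        = t * (t * C) - t * ⟪c⁻¹ • (z - p), w - p⟫ + ‖z - p‖ ^ 2 / (2 * c) := by
      rw [hC, real_inner_smul_left]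
      field_simp
    rw [h5] at h1
    have h6 : 0 ≤ t * (K + t * C) := by
      rw [hK]
      linarith
    exact nonneg_of_mul_nonneg_right h6 ht
  suffices 0 ≤ K by linarith
  by_contra! hneg
  have hd : 0 < C - K := by linarith
  -- At `t = -K / (C - K)` the value `K + t C` equals `-K² / (C - K)`.
  have h := key (-K / (C - K)) (div_pos (by linarith) hd) ((div_le_one hd).2 (by linarith))
  have h' : K + -K / (C - K) * C = -(K ^ 2 / (C - K)) := by
    field_simp
    ring
  have : 0 < K ^ 2 / (C - K) := div_pos (by nlinarith) hd
  linarith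

/-- A point `a` seeing the segment `[b, q]` under an obtuse or right angle lies in the ball with
that segment as a diameter. -/
lemma norm_bounds_of_inner_nonpos {E : Type*} [NormedAddCommGroup E] [InnerProductSpace ℝ E]
    {a b q : E} (h : ⟪a - q, a - b⟫ ≤ 0) :
    ‖a - b‖ ≤ ‖b - q‖ ∧ ‖a‖ ≤ (‖b + q‖ + ‖b - q‖) / 2 := by
  constructor
  · have h1 : a - q = (a - b) + (b - q) := by abel
    rw [h1, inner_add_left, real_inner_self_eq_norm_sq] at h
    have h2 := abs_real_inner_le_norm (b - q) (a - b)
    have h3 := neg_abs_le ⟪b - q, a - b⟫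
    by_contra! hlt
    nlinarith [norm_nonneg (a - b), norm_nonneg (b - q)]
  · have h1 : ‖(a - q) + (a - b)‖ ≤ ‖(a - q) - (a - b)‖ := by
      refine le_of_sq_le_sq ?_ (norm_nonneg _)
      rw [norm_add_sq_real, norm_sub_sq_real (a - q)]
      linarith
    have h2 : (a - q) - (a - b) = b - q := by abel
    have h3 : (2 : ℝ) • a = (b + q) + ((a - q) + (a - b)) := by module
    have h4 := norm_add_le (b + q) ((a - q) + (a - b))
    rw [← h3, norm_smul, Real.norm_ofNat] at h4
    rw [h2] at h1
    linarith

theorem subgradient_step (n : ℕ) (L : ℝ) (hL : 0 < L)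
    (f : EuclideanSpace ℝ (Fin n) → ℝ) (f' : EuclideanSpace ℝ (Fin n) → EuclideanSpace ℝ (Fin n))
    (hf : ∀ x, HasGradientAt f (f' x) x)
    (hlip : ∀ x y, ‖f' x - f' y‖ ≤ L * ‖x - y‖)
    (g : EuclideanSpace ℝ (Fin n) → ℝ) (hg : ConvexOn ℝ Set.univ g)
    (s α : ℝ) (hs : 0 < s) (hsα : s ≤ α) (hsL : L * s < 1)
    (x y xp : EuclideanSpace ℝ (Fin n))
    (hy : ∀ w, g y + ‖y - (x - s • f' x)‖ ^ 2 / (2 * s) ≤ g w + ‖w - (x - s • f' x)‖ ^ 2 / (2 * s))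
    (hxp : ∀ w, g xp + ‖xp - (x - α • f' y)‖ ^ 2 / (2 * α) ≤ g w + ‖w - (x - α • f' y)‖ ^ 2 / (2 * α)) :
    ∃ u : EuclideanSpace ℝ (Fin n), (∀ w, g w ≥ g xp + ⟪u, w - xp⟫) ∧
      ‖u + f' xp‖ ≤ ((L * α + (1 - L * s) ^ 2) / (α * (1 - L * s))) * ‖x - xp‖ := by
  have hα : 0 < α := hs.trans_le hsα
  have hv := subgradient_of_prox hg hs hy
  have hu := subgradient_of_prox hg hα hxp
  have hLs : 0 < 1 - L * s := by linarith
  obtain ⟨t, ht⟩ : ∃ t, t = s / α := ⟨_, rfl⟩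
  have ht0 : 0 < t := ht ▸ div_pos hs hα
  have ht1 : t ≤ 1 := ht ▸ (div_le_one hα).2 hsα
  have hsα' : s * α⁻¹ = t := by rw [ht, div_eq_mul_inv]
  set e := s • (f' y - f' x) with he
  have hmono : ⟪(x - y) - (t • (x - xp) - e), (x - y) - (x - xp)⟫ ≤ 0 := by
    have h1 := hv xp
    have h2 := hu y
    have h3 : (x - y) - (t • (x - xp) - e)
        = s • (s⁻¹ • (x - s • f' x - y) - α⁻¹ • (x - α • f' y - xp)) := by
      have hs1 : s * s⁻¹ = 1 := mul_inv_cancel₀ hs.ne'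
      have hα1 : α⁻¹ * α = 1 := inv_mul_cancel₀ hα.ne'
      simp only [smul_sub, smul_smul, he, ← hsα', hα1, inv_mul_cancel₀ hs.ne', hs1,
        one_smul]
      module
    have h4 : (x - y) - (x - xp) = xp - y := by abel
    rw [h3, h4, real_inner_smul_left, inner_sub_left]
    rw [← neg_sub xp y, inner_neg_right] at h2
    exact mul_nonpos_of_nonneg_of_nonpos hs.le (by linarith)
  obtain ⟨hab, ha⟩ := norm_bounds_of_inner_nonpos hmono
  have hen : ‖e‖ ≤ L * s * ‖x - y‖ := by
    rw [he, norm_smul, Real.norm_of_nonneg hs.le, norm_sub_rev x y]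
    nlinarith [hlip y x]
  have hminus : ‖(x - xp) - (t • (x - xp) - e)‖ ≤ (1 - t) * ‖x - xp‖ + ‖e‖ := by
    have h1 : (x - xp) - (t • (x - xp) - e) = (1 - t) • (x - xp) + e := by module
    rw [h1]
    refine (norm_add_le _ _).trans_eq ?_
    rw [norm_smul, Real.norm_of_nonneg (sub_nonneg.2 ht1)]
  have hplus : ‖(x - xp) + (t • (x - xp) - e)‖ ≤ (1 + t) * ‖x - xp‖ + ‖e‖ := by
    have h1 : (x - xp) + (t • (x - xp) - e) = (1 + t) • (x - xp) - e := by module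
    rw [h1]
    refine (norm_sub_le _ _).trans_eq ?_
    rw [norm_smul, Real.norm_of_nonneg (by linarith)]
  have hxy : ‖x - y‖ ≤ ‖x - xp‖ / (1 - L * s) := by
    rw [le_div_iff₀ hLs]
    linarith
  have hyx : ‖xp - y‖ ≤ (1 - t) * ‖x - xp‖ + L * s * (‖x - xp‖ / (1 - L * s)) := by
    have h1 : (x - y) - (x - xp) = xp - y := by abel
    rw [h1] at hab
    have h2 := mul_le_mul_of_nonneg_left hxy (mul_pos hL hs).le
    linarith
  refine ⟨α⁻¹ • (x - α • f' y - xp), hu, ?_⟩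
  have hsum : α⁻¹ • (x - α • f' y - xp) + f' xp = α⁻¹ • (x - xp) + (f' xp - f' y) := by
    simp only [smul_sub, smul_smul, inv_mul_cancel₀ hα.ne', one_smul]
    abel
  rw [hsum]
  calc ‖α⁻¹ • (x - xp) + (f' xp - f' y)‖
      ≤ α⁻¹ * ‖x - xp‖ + L * ‖xp - y‖ := by
        refine (norm_add_le _ _).trans (add_le_add ?_ (hlip _ _))
        rw [norm_smul, Real.norm_of_nonneg (inv_pos.2 hα).le]
    _ ≤ α⁻¹ * ‖x - xp‖
          + L * ((1 - t) * ‖x - xp‖ + L * s * (‖x - xp‖ / (1 - L * s))) := by gcongr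
    _ = ((L * α + (1 - L * s) ^ 2) / (α * (1 - L * s))) * ‖x - xp‖ := by
        rw [ht]
        field_simp
        ring
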